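/- arXiv:1802.08252 — 4 statements merged into one kernel-verified Lean document; each statement's English description precedes it below -/
import Mathlib

section
/- (Chen's identity) Let γ:[a,c]→ℝ^d be a piecewise continuously differentiable path and let a < b < c. Then for every word i_1 i_2 … i_m over {1,…,d}, X^γ_{a,c}(i_1 i_2 … i_m) = Σ_{j=0}^{m} X^γ_{a,b}(i_1 … i_j) · X^γ_{b,c}(i_{j+1} … i_m), where the j = 0 and j = m terms involve the empty word, whose signature value is 1. -/
open MeasureTheory intervalIntegral

/-- `sigRev d γ a w b` is the iterated-integral signature coefficient of the path
`γ : ℝ → (Fin d → ℝ)` over `[a, b]` at the *reversed* word `w`, defined by the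
inductive rule `X_{a,b}(w · i) = ∫_a^b X_{a,t}(w) γ_i'(t) dt`, with value `1` on
the empty word. -/
noncomputable def sigRev (d : ℕ) (γ : ℝ → Fin d → ℝ) (a : ℝ) :
    List (Fin d) → ℝ → ℝ
  | [], _ => 1
  | i :: w, b => ∫ t in a..b, sigRev d γ a w t * deriv (fun s => γ s i) t

/-- The iterated-integral signature `X^γ_{a,b}(w)` of the path `γ` at the word `w`. -/
noncomputable def sig (d : ℕ) (γ : ℝ → Fin d → ℝ) (a b : ℝ) (w : List (Fin d)) : ℝ :=
  sigRev d γ a w.reverse b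

/-- `γ` is piecewise continuously differentiable on `[a, b]`: there is a partition
`a = t₀ < t₁ < … < t_n = b` with `γ` continuously differentiable on each piece. -/
def PiecewiseC1On (d : ℕ) (γ : ℝ → Fin d → ℝ) (a b : ℝ) : Prop :=
  ∃ (n : ℕ) (t : Fin (n + 1) → ℝ), StrictMono t ∧ t 0 = a ∧ t (Fin.last n) = b ∧
    ∀ k : Fin n, ContDiffOn ℝ 1 γ (Set.Icc (t k.castSucc) (t k.succ))

theorem deriv_ii (d : ℕ) (a c : ℝ) (γ : ℝ → Fin d → ℝ) (hγ : PiecewiseC1On d γ a c)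
    (i : Fin d) : IntervalIntegrable (deriv (fun s => γ s i)) volume a c := by
  obtain ⟨n, t, ht, rfl, rfl, h⟩ := hγ
  have key : ∀ k : Fin (n + 1), IntervalIntegrable (deriv (fun s => γ s i)) volume (t 0) (t k) := by
    intro k
    induction k using Fin.induction with
    | zero => exact IntervalIntegrable.refl
    | succ k ih =>
      refine ih.trans ?_
      have hlt : t k.castSucc < t k.succ := ht (Fin.castSucc_lt_succ)
      have hc : ContDiffOn ℝ 1 (fun s => γ s i) (Set.Icc (t k.castSucc) (t k.succ)) :=
        contDiffOn_pi.1 (h k) i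
      have hd := hc.continuousOn_derivWithin (uniqueDiffOn_Icc hlt) le_rfl
      have hI := hd.intervalIntegrable_of_Icc (μ := volume) hlt.le
      refine hI.congr_uIoo ?_
      intro x hx
      rw [Set.uIoo_of_le hlt.le] at hx
      exact derivWithin_of_mem_nhds (Icc_mem_nhds hx.1 hx.2)
  exact key _

theorem sigRev_cont (d : ℕ) (a c : ℝ) (hac : a ≤ c) (γ : ℝ → Fin d → ℝ)
    (hI : ∀ i, IntervalIntegrable (deriv (fun s => γ s i)) volume a c) (w : List (Fin d)) :
    ContinuousOn (sigRev d γ a w) (Set.uIcc a c) := by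
  induction w with
  | nil => exact continuousOn_const
  | cons i w ih =>
    have := (hI i).continuousOn_mul ih
    exact intervalIntegral.continuousOn_primitive_interval' this Set.left_mem_uIcc

theorem sigRev_chen (d : ℕ) (a b c : ℝ) (hab : a < b) (hbc : b < c)
    (γ : ℝ → Fin d → ℝ)
    (hI : ∀ i, IntervalIntegrable (deriv (fun s => γ s i)) volume a c) (w : List (Fin d)) :
    ∀ t ∈ Set.Icc b c, sigRev d γ a w t =
      ∑ j ∈ Finset.range (w.length + 1),
        sigRev d γ a (w.drop j) b * sigRev d γ b (w.take j) t := by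
  induction w with
  | nil => intro t _; simp [sigRev]
  | cons i w ih =>
    intro t ht
    have hac : a ≤ c := (hab.trans hbc).le
    have hF : IntervalIntegrable (fun s => sigRev d γ a w s * deriv (fun s => γ s i) s)
        volume a c := (hI i).continuousOn_mul (sigRev_cont d a c hac γ hI w)
    have hIb : ∀ i, IntervalIntegrable (deriv (fun s => γ s i)) volume b c := fun i =>
      (hI i).mono_set (by
        rw [Set.uIcc_of_le hbc.le, Set.uIcc_of_le hac]; exact Set.Icc_subset_Icc_left hab.le)
    have hG : ∀ u : List (Fin d), IntervalIntegrable
        (fun s => sigRev d γ b u s * deriv (fun s => γ s i) s) volume b t := fun u =>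
      ((hIb i).continuousOn_mul (sigRev_cont d b c hbc.le γ hIb u)).mono_set (by
        rw [Set.uIcc_of_le hbc.le, Set.uIcc_of_le ht.1]; exact Set.Icc_subset_Icc_right ht.2)
    have h1 : IntervalIntegrable (fun s => sigRev d γ a w s * deriv (fun s => γ s i) s)
        volume a b := hF.mono_set (by
        rw [Set.uIcc_of_le hab.le, Set.uIcc_of_le hac]; exact Set.Icc_subset_Icc_right hbc.le)
    have h2 : IntervalIntegrable (fun s => sigRev d γ a w s * deriv (fun s => γ s i) s)
        volume b t := hF.mono_set (by
        rw [Set.uIcc_of_le ht.1, Set.uIcc_of_le hac]; exact Set.Icc_subset_Icc hab.le ht.2)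
    rw [List.length_cons, Finset.sum_range_succ']
    simp only [List.drop_succ_cons, List.take_succ_cons, List.drop_zero, List.take_zero]
    have e0 : sigRev d γ b [] t = 1 := rfl
    rw [e0, mul_one]
    simp only [sigRev]
    rw [← intervalIntegral.integral_add_adjacent_intervals h1 h2, add_comm]
    congr 1
    have e : ∫ s in b..t, sigRev d γ a w s * deriv (fun s => γ s i) s =
        ∫ s in b..t, ∑ j ∈ Finset.range (w.length + 1), sigRev d γ a (w.drop j) b *
          (sigRev d γ b (w.take j) s * deriv (fun s => γ s i) s) := by
      apply intervalIntegral.integral_congr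
      intro s hs
      rw [Set.uIcc_of_le ht.1] at hs
      simp only
      rw [ih s ⟨hs.1, hs.2.trans ht.2⟩, Finset.sum_mul]
      exact Finset.sum_congr rfl fun _ _ => mul_assoc _ _ _
    rw [e, intervalIntegral.integral_finsetSum fun j _ => (hG _).const_mul _]
    exact Finset.sum_congr rfl fun _ _ => intervalIntegral.integral_const_mul _ _

/-- Chen's identity: for a piecewise continuously differentiable path
`γ` and `a < b < c`, `X^γ_{a,c}(w) = ∑_{j=0}^m X^γ_{a,b}(w₁…w_j) · X^γ_{b,c}(w_{j+1}…w_m)`. -/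
theorem chen_identity (d : ℕ) (a b c : ℝ) (hab : a < b) (hbc : b < c)
    (γ : ℝ → Fin d → ℝ) (hγ : PiecewiseC1On d γ a c) (w : List (Fin d)) :
    sig d γ a c w =
      ∑ j ∈ Finset.range (w.length + 1),
        sig d γ a b (w.take j) * sig d γ b c (w.drop j) := by
  have h := sigRev_chen d a b c hab hbc γ (deriv_ii d a c γ hγ) w.reverse c ⟨hbc.le, le_rfl⟩
  unfold sig
  rw [h, List.length_reverse, ← Finset.sum_range_reflect]
  refine Finset.sum_congr rfl fun j hj => ?_
  have hj' : j ≤ w.length := Nat.lt_succ_iff.1 (Finset.mem_range.1 hj)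
  rw [List.drop_reverse, List.take_reverse]
  have e1 : w.length - (w.length + 1 - 1 - j) = j := by omega
  rw [e1]
end

section
/- (Reparametrization invariance of the signature) Let γ:[a,b]→ℝ^d be a piecewise continuously differentiable path and let φ:[a',b']→[a,b] be a continuously differentiable, strictly increasing surjection. Then the reparametrized path γ∘φ has the same signature as γ: for every word w over {1,…,d}, X^{γ∘φ}_{a',b'}(w) = X^γ_{a,b}(w). -/
open MeasureTheory intervalIntegral

/-- A point strictly between the ends of a partition and not on it lies in an open piece. -/
theorem exists_piece {n : ℕ} (t : Fin (n + 1) → ℝ) (y : ℝ) (h0 : t 0 < y)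
    (hy : ∀ k, t k ≠ y) (j : Fin (n + 1)) :
    y < t j → ∃ k : Fin n, y ∈ Set.Ioo (t k.castSucc) (t k.succ) := by
  induction j using Fin.induction with
  | zero => intro h; exact absurd h0 (not_lt.mpr h.le)
  | succ k ih =>
    intro h
    by_cases hk : y < t k.castSucc
    · exact ih hk
    · exact ⟨k, lt_of_le_of_ne (not_lt.mp hk) (hy _), h⟩

theorem sigRev_reparam (d : ℕ) (a b a' b' : ℝ) (γ : ℝ → Fin d → ℝ)
    (hγ : PiecewiseC1On d γ a b) (φ : ℝ → ℝ)
    (hφ : ContDiffOn ℝ 1 φ (Set.Icc a' b'))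
    (hmono : StrictMonoOn φ (Set.Icc a' b'))
    (ha : φ a' = a) (hb : φ b' = b)
    (w : List (Fin d)) : ∀ x ∈ Set.Icc a' b',
    sigRev d (fun t => γ (φ t)) a' w x = sigRev d γ a w (φ x) := by
  induction w with
  | nil => intro x _; simp [sigRev]
  | cons i w ih =>
    intro x hx
    have hab : a' ≤ b' := hx.1.trans hx.2
    have hsub : Set.Icc a' x ⊆ Set.Icc a' b' := Set.Icc_subset_Icc_right hx.2
    have hax : a ≤ φ x := ha ▸ hmono.monotoneOn ⟨le_rfl, hab⟩ hx hx.1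
    have himg : φ '' Set.Icc a' x = Set.Icc a (φ x) := by
      apply Set.Subset.antisymm
      · rintro _ ⟨s, hs, rfl⟩
        exact ⟨ha ▸ hmono.monotoneOn ⟨le_rfl, hab⟩ (hsub hs) hs.1,
          hmono.monotoneOn (hsub hs) hx hs.2⟩
      · rw [← ha]
        exact intermediate_value_Icc hx.1 (hφ.continuousOn.mono hsub)
    simp only [sigRev]
    rw [integral_of_le hx.1, integral_of_le hax, ← integral_Icc_eq_integral_Ioc,
      ← integral_Icc_eq_integral_Ioc, ← himg,
      integral_image_eq_integral_deriv_smul_of_monotoneOn (f' := derivWithin φ (Set.Icc a' b'))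
        measurableSet_Icc
        (fun s hs => (((hφ.differentiableOn one_ne_zero) s (hsub hs)).hasDerivWithinAt).mono hsub)
        (hmono.monotoneOn.mono hsub)]
    obtain ⟨n, t, ht, ht0, htn, hC⟩ := hγ
    have hfin : (Set.Icc a' b' ∩ φ ⁻¹' (Set.range t)).Finite := by
      apply Set.Finite.of_finite_image (f := φ)
      · exact (Set.finite_range t).subset (by rintro _ ⟨s, hs, rfl⟩; exact hs.2)
      · exact hmono.injOn.mono Set.inter_subset_left
    apply setIntegral_congr_ae measurableSet_Icc
    have hae : ∀ᵐ s ∂(volume : Measure ℝ), s ∉ Set.Icc a' b' ∩ φ ⁻¹' (Set.range t) :=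
      (Set.Finite.countable hfin).ae_notMem volume
    filter_upwards [hae] with s hs hsx
    have hsI := hsub hsx
    have hnr : ∀ k, t k ≠ φ s := fun k hk => hs ⟨hsI, k, hk⟩
    have h1 : t 0 < φ s := lt_of_le_of_ne
      (by rw [ht0, ← ha]; exact hmono.monotoneOn ⟨le_rfl, hab⟩ hsI hsI.1) (hnr 0)
    have h2 : φ s < t (Fin.last n) := lt_of_le_of_ne
      (by rw [htn, ← hb]; exact hmono.monotoneOn hsI ⟨hab, le_rfl⟩ hsI.2) (hnr _).symm
    obtain ⟨k, hk⟩ := exists_piece t (φ s) h1 hnr _ h2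
    have hs1 : a' < s := lt_of_le_of_ne hsI.1 (by rintro rfl; exact hnr 0 (ht0.trans ha.symm))
    have hs2 : s < b' := lt_of_le_of_ne hsI.2 (by rintro rfl; exact hnr _ (htn.trans hb.symm))
    have hnhds : Set.Icc a' b' ∈ nhds s := Icc_mem_nhds hs1 hs2
    have hdφ : DifferentiableAt ℝ φ s :=
      (hφ.differentiableOn one_ne_zero).differentiableAt hnhds
    have hdγ : DifferentiableAt ℝ γ (φ s) :=
      ((hC k).differentiableOn one_ne_zero).differentiableAt (Icc_mem_nhds hk.1 hk.2)
    have hdi : DifferentiableAt ℝ (fun r => γ r i) (φ s) := differentiableAt_pi.mp hdγ i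
    have hchain : deriv (fun r => γ (φ r) i) s = deriv (fun r => γ r i) (φ s) * deriv φ s :=
      (hdi.hasDerivAt.comp s hdφ.hasDerivAt).deriv
    rw [ih s hsI, hchain, derivWithin_of_mem_nhds hnhds, smul_eq_mul]
    ring

/-- reparametrization invariance: if `φ : [a',b'] → [a,b]` is a
continuously differentiable, strictly increasing surjection, then `γ ∘ φ` has the
same signature as `γ`. -/
theorem sig_reparam_invariant (d : ℕ) (a b a' b' : ℝ) (γ : ℝ → Fin d → ℝ)
    (hγ : PiecewiseC1On d γ a b) (φ : ℝ → ℝ)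
    (hφ : ContDiffOn ℝ 1 φ (Set.Icc a' b'))
    (hmono : StrictMonoOn φ (Set.Icc a' b'))
    (hsurj : φ '' Set.Icc a' b' = Set.Icc a b)
    (w : List (Fin d)) :
    sig d (fun t => γ (φ t)) a' b' w = sig d γ a b w := by
  have hab : a ≤ b := by
    obtain ⟨n, t, ht, h0, hn, -⟩ := hγ
    rw [← h0, ← hn]
    exact ht.monotone (Fin.zero_le _)
  obtain ⟨p, hp, hpa⟩ : a ∈ φ '' Set.Icc a' b' := hsurj ▸ Set.left_mem_Icc.mpr hab
  obtain ⟨q, hq, hqb⟩ : b ∈ φ '' Set.Icc a' b' := hsurj ▸ Set.right_mem_Icc.mpr hab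
  have hab' : a' ≤ b' := hp.1.trans hp.2
  have hl := Set.left_mem_Icc.mpr hab'
  have hr := Set.right_mem_Icc.mpr hab'
  have hla : φ a' ∈ Set.Icc a b := hsurj ▸ Set.mem_image_of_mem φ hl
  have hrb : φ b' ∈ Set.Icc a b := hsurj ▸ Set.mem_image_of_mem φ hr
  have ha : φ a' = a := le_antisymm (hpa ▸ hmono.monotoneOn hl hp hp.1) hla.1
  have hb : φ b' = b := le_antisymm hrb.2 (hqb ▸ hmono.monotoneOn hq hr hq.2)
  unfold sig
  rw [sigRev_reparam d a b a' b' γ hγ φ hφ hmono ha hb w.reverse b' hr, hb]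
end

section
/- (Witt's second formula) Let n_1, …, n_d be nonnegative integers with n_1 + ⋯ + n_d = m ≥ 1. The number of Lyndon words of length m over the alphabet {1,…,d} in which letter i occurs exactly n_i times (equivalently, the number of Hall basis elements of the free Lie algebra with that foliage letter-count) equals (1/m) Σ_{δ} μ(δ) · (m/δ)! / ((n_1/δ)! ⋯ (n_d/δ)!), where the sum ranges over all positive integers δ dividing every n_i and μ is the Möbius function. -/
/-- A Lyndon word: a nonempty word that is strictly smaller (in lexicographic order)
than all of its nontrivial rotations. -/
def IsLyndon {α : Type*} [LinearOrder α] (w : List α) : Prop :=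
  w ≠ [] ∧ ∀ k, 0 < k → k < w.length → w < w.drop k ++ w.take k

namespace WittAux

theorem length_eq {d : ℕ} (w : List (Fin d)) : w.length = ∑ i, w.count i := by
  induction w with
  | nil => simp
  | cons a t ih =>
    simp [List.count_cons, Finset.sum_add_distrib, ih]

/-- words with letter counts `n`. -/
def W {d : ℕ} (n : Fin d → ℕ) : Finset (List (Fin d)) :=
  ((Finset.univ : Finset (Fin (∑ i, n i) → Fin d)).image List.ofFn).filter
    (fun w => ∀ i, w.count i = n i)

theorem mem_W {d : ℕ} {n : Fin d → ℕ} {w : List (Fin d)} :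
    w ∈ W n ↔ ∀ i, w.count i = n i := by
  unfold W
  simp only [Finset.mem_filter, Finset.mem_image, Finset.mem_univ, true_and,
    and_iff_right_iff_imp]
  intro h
  have hl : w.length = ∑ i, n i := by
    rw [length_eq]; exact Finset.sum_congr rfl fun i _ => h i
  rw [← hl]
  exact ⟨w.get, List.ofFn_get w⟩

theorem W_length {d : ℕ} {n : Fin d → ℕ} {w : List (Fin d)} (h : w ∈ W n) :
    w.length = ∑ i, n i := by
  rw [length_eq]; exact Finset.sum_congr rfl fun i _ => mem_W.1 h i

theorem rotate_mem_W {d : ℕ} {n : Fin d → ℕ} {w : List (Fin d)} (h : w ∈ W n) (k : ℕ) :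
    w.rotate k ∈ W n := by
  rw [mem_W] at *
  intro i
  rw [← h i]
  exact (List.rotate_perm w k).count_eq i

theorem card_W {d : ℕ} (m : ℕ) : ∀ (n : Fin d → ℕ), ∑ i, n i = m →
    (W n).card * ∏ i, (n i).factorial = m.factorial := by
  induction m with
  | zero =>
    intro n hn
    have h0 : ∀ i, n i = 0 := by simpa using hn
    have : W n = {[]} := by
      ext w
      rw [Finset.mem_singleton]
      constructor
      · intro h
        have := W_length h
        rw [hn] at this
        exact List.length_eq_zero_iff.1 this
      · rintro rfl
        rw [mem_W]; simp [h0]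
    simp [this, h0]
  | succ m ih =>
    intro n hn
    have hW : W n = (Finset.univ.filter fun i => n i ≠ 0).biUnion
        (fun i => (W (Function.update n i (n i - 1))).image (List.cons i)) := by
      ext w
      simp only [Finset.mem_biUnion, Finset.mem_filter, Finset.mem_univ, true_and,
        Finset.mem_image]
      constructor
      · intro h
        cases w with
        | nil => have := W_length h; simp [hn] at this
        | cons a t =>
          have h' := mem_W.1 h
          refine ⟨a, ?_, t, ?_, rfl⟩
          · have := h' a; simp at this; omega
          · rw [mem_W]
            intro i
            have := h' i
            by_cases hi : i = a
            · subst hi; simp at this ⊢; omega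
            · rw [Function.update_of_ne hi, ← this, List.count_cons_of_ne (Ne.symm hi)]
      · rintro ⟨a, ha, t, ht, rfl⟩
        rw [mem_W] at *
        intro i
        have := ht i
        by_cases hi : i = a
        · subst hi; simp at this ⊢; omega
        · rw [Function.update_of_ne hi] at this
          rw [← this, List.count_cons_of_ne (Ne.symm hi)]
    rw [hW, Finset.card_biUnion, Finset.sum_mul]
    · have : ∀ i ∈ Finset.univ.filter (fun i => n i ≠ 0),
          ((W (Function.update n i (n i - 1))).image (List.cons i)).card *
            ∏ j, (n j).factorial = n i * m.factorial := by
        intro i hi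
        have hi : n i ≠ 0 := by simpa using hi
        rw [Finset.card_image_of_injective _ List.cons_injective]
        have e := ih (Function.update n i (n i - 1)) (by
          rw [Finset.sum_update_of_mem (Finset.mem_univ i)]
          rw [← Finset.add_sum_erase _ _ (Finset.mem_univ i)] at hn
          rw [Finset.sdiff_singleton_eq_erase]
          omega)
        rw [← e, ← Finset.mul_prod_erase _ _ (Finset.mem_univ i),
          ← Finset.mul_prod_erase _ (fun j => (Function.update n i (n i - 1) j).factorial)
            (Finset.mem_univ i)]
        have : ∏ x ∈ Finset.univ.erase i, (Function.update n i (n i - 1) x).factorial =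
            ∏ x ∈ Finset.univ.erase i, (n x).factorial := by
          refine Finset.prod_congr rfl fun x hx => ?_
          rw [Function.update_of_ne (Finset.ne_of_mem_erase hx)]
        rw [this, Function.update_self, ← Nat.mul_factorial_pred hi]
        ring
      rw [Finset.sum_congr rfl this, ← Finset.sum_mul, Finset.sum_filter_ne_zero, hn,
        Nat.factorial_succ]
    · intro i _ j _ hij
      rw [Function.onFun, Finset.disjoint_left]
      intro w hw hw'
      rw [Finset.mem_image] at hw hw'
      obtain ⟨t, _, rfl⟩ := hw
      obtain ⟨t', _, h⟩ := hw'
      simp at h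
      exact hij h.1.symm

theorem comm_pow {α : Type*} (u : List α) (j : ℕ) : ∀ v : List α, v.length = j * u.length →
    u ++ v = v ++ u → v = (List.replicate j u).flatten := by
  induction j with
  | zero => intro v hv _; simpa using hv
  | succ j ih =>
    intro v hv h
    have hp : u <+: v := by
      have h1 : u <+: v ++ u := h ▸ List.prefix_append u v
      refine List.prefix_of_prefix_length_le h1 (List.prefix_append v u) ?_
      rw [hv]; nlinarith
    obtain ⟨v', rfl⟩ := hp
    rw [List.append_assoc] at h
    have h2 := List.append_cancel_left h
    have := ih v' (by simp at hv; linarith) h2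
    rw [List.replicate_succ, List.flatten_cons, ← this]

theorem pow_comm' {α : Type*} (u : List α) (j : ℕ) :
    u ++ (List.replicate j u).flatten = (List.replicate j u).flatten ++ u := by
  induction j with
  | zero => simp
  | succ j ih => rw [List.replicate_succ, List.flatten_cons, List.append_assoc, ← ih]

/-- a word fixed by rotation by `q` is a power -/
theorem eq_pow {α : Type*} (w : List α) (q δ : ℕ) (hδ : 0 < δ) (hl : w.length = δ * q)
    (h : w.rotate q = w) : w = (List.replicate δ (w.take q)).flatten := by
  obtain ⟨j, rfl⟩ : ∃ j, δ = j + 1 := ⟨δ - 1, by omega⟩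
  have hq : q ≤ w.length := by rw [hl]; nlinarith
  rw [List.rotate_eq_drop_append_take hq] at h
  have h3 : w.take q ++ w.drop q = w.drop q ++ w.take q := by
    rw [h, List.take_append_drop]
  have h4 := comm_pow (w.take q) j (w.drop q) (by
    rw [List.length_drop, List.length_take, min_eq_left hq, hl, Nat.succ_mul]; omega) h3
  rw [List.replicate_succ, List.flatten_cons, ← h4, List.take_append_drop]

theorem count_pow {d : ℕ} (u : List (Fin d)) (j : ℕ) (i : Fin d) :
    ((List.replicate j u).flatten).count i = j * u.count i := by
  induction j with
  | zero => simp
  | succ j ih => rw [List.replicate_succ, List.flatten_cons, List.count_append, ih]; ring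

theorem length_pow {α : Type*} (u : List α) (j : ℕ) :
    ((List.replicate j u).flatten).length = j * u.length := by
  simp

theorem card_fixed {d : ℕ} (n : Fin d → ℕ) (δ : ℕ) (hδ : 0 < δ) (hd : ∀ i, δ ∣ n i) :
    ((W n).filter fun w => w.rotate ((∑ i, n i) / δ) = w).card =
      (W fun i => n i / δ).card := by
  have hs : ∑ i, n i = δ * ∑ i, n i / δ := by
    rw [Finset.mul_sum]
    exact Finset.sum_congr rfl fun i _ => (Nat.mul_div_cancel' (hd i)).symm
  have hq : (∑ i, n i) / δ = ∑ i, n i / δ := by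
    rw [hs]; exact Nat.mul_div_cancel_left _ hδ
  rw [hq]
  symm
  refine Finset.card_bij (fun u _ => (List.replicate δ u).flatten) ?_ ?_ ?_
  · intro u hu
    rw [Finset.mem_filter, mem_W]
    refine ⟨fun i => ?_, ?_⟩
    · rw [count_pow, mem_W.1 hu, Nat.mul_div_cancel' (hd i)]
    · rw [← W_length hu]
      obtain ⟨j, rfl⟩ : ∃ j, δ = j + 1 := ⟨δ - 1, by omega⟩
      rw [List.replicate_succ, List.flatten_cons, List.rotate_append_length_eq, pow_comm']
  · intro u hu v hv h
    obtain ⟨j, rfl⟩ : ∃ j, δ = j + 1 := ⟨δ - 1, by omega⟩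
    simp only [List.replicate_succ, List.flatten_cons] at h
    exact (List.append_inj h ((W_length hu).trans (W_length hv).symm)).1
  · intro w hw
    rw [Finset.mem_filter] at hw
    have e := eq_pow w _ δ hδ ((W_length hw.1).trans hs) hw.2
    refine ⟨w.take (∑ i, n i / δ), ?_, e.symm⟩
    rw [mem_W]
    intro i
    rw [← mem_W.1 hw.1 i]
    conv_rhs => rw [e]
    rw [count_pow, Nat.mul_div_cancel_left _ hδ]

/-- minimal rotation period -/
noncomputable def per {α : Type*} (w : List α) : ℕ :=
  Function.minimalPeriod (fun l : List α => l.rotate 1) w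

theorem iter_rot {α : Type*} (w : List α) (k : ℕ) :
    (fun l : List α => l.rotate 1)^[k] w = w.rotate k := by
  induction k with
  | zero => simp
  | succ k ih => rw [Function.iterate_succ_apply', ih, List.rotate_rotate]

theorem rot_iff {α : Type*} (w : List α) (k : ℕ) : w.rotate k = w ↔ per w ∣ k := by
  rw [per, ← Function.isPeriodicPt_iff_minimalPeriod_dvd, Function.IsPeriodicPt,
    Function.IsFixedPt, iter_rot]

theorem per_dvd {α : Type*} (w : List α) : per w ∣ w.length :=
  (rot_iff w _).1 (List.rotate_length w)

theorem sum_moebius (e : ℕ) (he : e ≠ 0) :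
    ∑ δ ∈ e.divisors, ArithmeticFunction.moebius δ = if e = 1 then 1 else 0 := by
  rw [← ArithmeticFunction.coe_mul_zeta_apply, ArithmeticFunction.moebius_mul_coe_zeta,
    ArithmeticFunction.one_apply]

theorem card_prim {d : ℕ} (n : Fin d → ℕ) (hm : 0 < ∑ i, n i) :
    (((W n).filter fun w => per w = ∑ i, n i).card : ℤ) =
      ∑ δ ∈ (Finset.univ.gcd n).divisors,
        ArithmeticFunction.moebius δ * ((W fun i => n i / δ).card : ℤ) := by
  have hg : Finset.univ.gcd n ≠ 0 := by
    intro h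
    rw [Finset.gcd_eq_zero_iff] at h
    have : ∑ i, n i = 0 := Finset.sum_eq_zero h
    omega
  have h1 : ∀ δ ∈ (Finset.univ.gcd n).divisors,
      ArithmeticFunction.moebius δ * ((W fun i => n i / δ).card : ℤ) =
      ∑ w ∈ W n, if w.rotate ((∑ i, n i) / δ) = w then ArithmeticFunction.moebius δ else 0 := by
    intro δ hδ
    have hδ0 := Nat.pos_of_mem_divisors hδ
    have hd := Nat.dvd_of_mem_divisors hδ
    rw [← card_fixed n δ hδ0 (fun i => hd.trans (Finset.gcd_dvd (Finset.mem_univ i))),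
      ← Finset.sum_filter, Finset.sum_const, nsmul_eq_mul, mul_comm]
  rw [Finset.sum_congr rfl h1, Finset.sum_comm, Finset.card_filter]
  push_cast
  refine Finset.sum_congr rfl fun w hw => ?_
  have hl := W_length hw
  obtain ⟨e, he⟩ := per_dvd w
  rw [hl] at he
  have hp : 0 < per w := Nat.pos_of_mul_pos_right (he ▸ hm)
  have he0 : 0 < e := Nat.pos_of_mul_pos_left (he ▸ hm)
  rw [← Finset.sum_filter]
  have : (Finset.univ.gcd n).divisors.filter (fun δ => w.rotate ((∑ i, n i) / δ) = w)
      = e.divisors := by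
    ext δ
    rw [Finset.mem_filter, Nat.mem_divisors, Nat.mem_divisors, rot_iff]
    constructor
    · rintro ⟨⟨hd, _⟩, c, hc⟩
      refine ⟨?_, he0.ne'⟩
      have hds : δ ∣ ∑ i, n i :=
        Finset.dvd_sum fun i _ => hd.trans (Finset.gcd_dvd (Finset.mem_univ i))
      have h2 := Nat.div_mul_cancel hds
      rw [hc, he, mul_assoc] at h2
      have := Nat.eq_of_mul_eq_mul_left hp h2
      exact ⟨c, by rw [← this, mul_comm]⟩
    · rintro ⟨⟨c, hc⟩, _⟩
      have hδ : 0 < δ := Nat.pos_of_mul_pos_right (hc ▸ he0)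
      have hq : (∑ i, n i) / δ = per w * c := by
        rw [he, hc, show per w * (δ * c) = δ * (per w * c) by ring,
          Nat.mul_div_cancel_left _ hδ]
      refine ⟨⟨?_, hg⟩, hq ▸ dvd_mul_right _ _⟩
      refine Finset.dvd_gcd fun i _ => ?_
      have e1 := eq_pow w (per w * c) δ hδ (by rw [hl, he, hc]; ring)
        ((rot_iff _ _).2 (dvd_mul_right _ _))
      rw [← mem_W.1 hw i, e1, count_pow]
      exact dvd_mul_right _ _
  rw [this, sum_moebius e he0.ne']
  congr 1
  rw [he, eq_iff_iff]
  constructor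
  · intro h
    exact Nat.eq_of_mul_eq_mul_left hp (by rw [← h, mul_one])
  · rintro rfl
    simp

theorem lyndon_iff {α : Type*} [LinearOrder α] (w : List α) :
    IsLyndon w ↔ w ≠ [] ∧ ∀ k, 0 < k → k < w.length → w < w.rotate k := by
  unfold IsLyndon
  refine and_congr_right fun _ => forall_congr' fun k => forall_congr' fun _ =>
    forall_congr' fun hk => ?_
  rw [List.rotate_eq_drop_append_take hk.le]

theorem lyndon_per {α : Type*} [LinearOrder α] {w : List α} (h : IsLyndon w) :
    per w = w.length := by
  rw [lyndon_iff] at h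
  have hl : 0 < w.length := List.length_pos_iff.2 h.1
  have hd := per_dvd w
  have hle := Nat.le_of_dvd hl hd
  have hp := Nat.pos_of_dvd_of_pos hd hl
  by_contra hne
  have := h.2 (per w) hp (by omega)
  rw [(rot_iff w _).2 dvd_rfl] at this
  exact lt_irrefl _ this

theorem rotate_inj_of_prim {α : Type*} {w : List α} (h : per w = w.length) {j k : ℕ}
    (hj : j < w.length) (hk : k < w.length) (hjk : w.rotate j = w.rotate k) : j = k := by
  rw [← iter_rot, ← iter_rot] at hjk
  rw [← h] at hj hk
  exact (Function.iterate_eq_iterate_iff_of_lt_minimalPeriod hj hk).1 hjk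

theorem per_rotate {α : Type*} (w : List α) (k : ℕ) : per (w.rotate k) = per w := by
  have : ∀ q, per (w.rotate k) ∣ q ↔ per w ∣ q := by
    intro q
    rw [← rot_iff, ← rot_iff, List.rotate_rotate, add_comm, ← List.rotate_rotate,
      List.rotate_eq_rotate]
  exact Nat.dvd_antisymm ((this _).2 dvd_rfl) ((this _).1 dvd_rfl)

theorem lyndon_unique {α : Type*} [LinearOrder α] {w w' : List α} (h : IsLyndon w)
    (h' : IsLyndon w') {r : ℕ} (hr : w.rotate r = w') : w = w' := by
  rw [lyndon_iff] at h h'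
  have hl : 0 < w.length := List.length_pos_iff.2 h.1
  rw [← List.rotate_mod] at hr
  have hlt := Nat.mod_lt r hl
  generalize r % w.length = s at hr hlt
  rcases Nat.eq_zero_or_pos s with rfl | hs
  · simpa using hr
  · have h1 := h.2 s hs hlt
    have hl' : w'.length = w.length := by rw [← hr, List.length_rotate]
    have h2 := h'.2 (w.length - s) (by omega) (by omega)
    rw [← hr, List.rotate_rotate, Nat.add_sub_cancel' hlt.le, List.rotate_length] at h2
    exact absurd h1 (lt_asymm h2)

open scoped Classical in
theorem card_lyndon {d : ℕ} (n : Fin d → ℕ) (hm : 0 < ∑ i, n i) :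
    ((W n).filter fun w => IsLyndon w).card * (∑ i, n i) =
      ((W n).filter fun w => per w = ∑ i, n i).card := by
  rw [← Finset.card_range (∑ i, n i), ← Finset.card_product, Finset.card_range]
  refine Finset.card_bij (fun p _ => p.1.rotate p.2) ?_ ?_ ?_
  · rintro ⟨w, k⟩ h
    rw [Finset.mem_product, Finset.mem_filter, Finset.mem_range] at h
    rw [Finset.mem_filter, per_rotate, lyndon_per h.1.2, W_length h.1.1]
    exact ⟨rotate_mem_W h.1.1 k, rfl⟩
  · rintro ⟨w, j⟩ h ⟨w', k⟩ h' e
    rw [Finset.mem_product, Finset.mem_filter, Finset.mem_range] at h h'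
    dsimp only at h h' e
    have hl := W_length h.1.1
    have hl' := W_length h'.1.1
    have hr : w.rotate (j + (∑ i, n i - k)) = w' := by
      rw [← List.rotate_rotate, e, List.rotate_rotate, Nat.add_sub_cancel' h'.2.le, ← hl',
        List.rotate_length]
    obtain rfl := lyndon_unique h.1.2 h'.1.2 hr
    rw [rotate_inj_of_prim (lyndon_per h.1.2) (hl ▸ h.2) (hl ▸ h'.2) e]
  · intro v hv
    rw [Finset.mem_filter] at hv
    have hl := W_length hv.1
    obtain ⟨k, hk, hmin⟩ := Finset.exists_min_image (Finset.range (∑ i, n i))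
      (fun k => v.rotate k) ⟨0, Finset.mem_range.2 hm⟩
    rw [Finset.mem_range] at hk
    have hmin' : ∀ j, v.rotate k ≤ v.rotate j := by
      intro j
      rw [← List.rotate_mod v j]
      exact hmin _ (Finset.mem_range.2 (hl ▸ Nat.mod_lt _ (hl ▸ hm)))
    have hL : IsLyndon (v.rotate k) := by
      rw [lyndon_iff]
      refine ⟨?_, ?_⟩
      · rw [← List.length_pos_iff, List.length_rotate, hl]; exact hm
      · intro j hj hj'
        refine lt_of_le_of_ne ?_ ?_
        · rw [List.rotate_rotate]; exact hmin' _
        · intro e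
          have := Nat.le_of_dvd hj ((rot_iff _ _).1 e.symm)
          rw [per_rotate, hv.2] at this
          rw [List.length_rotate, hl] at hj'
          omega
    have key : (v.rotate k).rotate ((∑ i, n i - k) % (∑ i, n i)) = v := by
      have : ∑ i, n i = (v.rotate k).length := by rw [List.length_rotate, hl]
      conv_lhs => rw [this, List.rotate_mod, ← this]
      rw [List.rotate_rotate, Nat.add_sub_cancel' hk.le, ← hl, List.rotate_length]
    refine ⟨(v.rotate k, (∑ i, n i - k) % (∑ i, n i)), ?_, key⟩
    rw [Finset.mem_product, Finset.mem_filter, Finset.mem_range]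
    exact ⟨⟨rotate_mem_W hv.1 k, hL⟩, Nat.mod_lt _ hm⟩

end WittAux

open scoped Classical in
/-- Witt's second formula: for `n₁ + ⋯ + n_d = m ≥ 1`, the number of
Lyndon words of length `m` over `{1, …, d}` in which letter `i` occurs exactly `n i`
times equals `(1/m) ∑_{δ} μ(δ) (m/δ)! / ((n₁/δ)! ⋯ (n_d/δ)!)`, the sum running over
all positive integers `δ` dividing every `n i` (equivalently over the divisors of
their gcd), `μ` being the Möbius function. -/
theorem witt_second_formula (d m : ℕ) (hm : 1 ≤ m) (n : Fin d → ℕ)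
    (hsum : ∑ i, n i = m) :
    ((Finset.univ.filter fun f : Fin m → Fin d =>
        IsLyndon (List.ofFn f) ∧ ∀ i, (List.ofFn f).count i = n i).card : ℚ) =
      (1 / (m : ℚ)) * ∑ δ ∈ (Finset.univ.gcd n).divisors,
        ((ArithmeticFunction.moebius δ : ℤ) : ℚ) * ((m / δ).factorial : ℚ) /
          ∏ i, ((n i / δ).factorial : ℚ) := by
  subst hsum
  have hm0 : ((∑ i, n i : ℕ) : ℚ) ≠ 0 := by
    exact_mod_cast Nat.one_le_iff_ne_zero.1 hm
  have hcard : (Finset.univ.filter fun f : Fin (∑ i, n i) → Fin d =>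
        IsLyndon (List.ofFn f) ∧ ∀ i, (List.ofFn f).count i = n i).card =
      ((WittAux.W n).filter fun w => IsLyndon w).card := by
    refine Finset.card_bij (fun f _ => List.ofFn f) ?_ ?_ ?_
    · intro f hf
      rw [Finset.mem_filter] at hf
      rw [Finset.mem_filter, WittAux.mem_W]
      exact ⟨hf.2.2, hf.2.1⟩
    · intro f _ g _ h
      exact List.ofFn_injective h
    · intro w hw
      rw [Finset.mem_filter] at hw
      have h := hw.1
      rw [WittAux.W, Finset.mem_filter, Finset.mem_image] at h
      obtain ⟨⟨f, _, rfl⟩, hc⟩ := h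
      exact ⟨f, Finset.mem_filter.2 ⟨Finset.mem_univ _, hw.2, hc⟩, rfl⟩
  rw [hcard]
  have h1 := WittAux.card_lyndon n hm
  have h2 := WittAux.card_prim n hm
  rw [← h1] at h2
  have h3 : (((WittAux.W n).filter fun w => IsLyndon w).card : ℚ) * ((∑ i, n i : ℕ) : ℚ) =
      ∑ δ ∈ (Finset.univ.gcd n).divisors,
        ((ArithmeticFunction.moebius δ : ℤ) : ℚ) *
          ((WittAux.W fun i => n i / δ).card : ℚ) := by
    exact_mod_cast h2
  rw [one_div, eq_inv_mul_iff_mul_eq₀ hm0, mul_comm, h3]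
  refine Finset.sum_congr rfl fun δ hδ => ?_
  have hδ0 := Nat.pos_of_mem_divisors hδ
  have hd := Nat.dvd_of_mem_divisors hδ
  have hs : ∑ i, n i / δ = (∑ i, n i) / δ :=
    (Nat.sum_div fun i _ => hd.trans (Finset.gcd_dvd (Finset.mem_univ i))).symm
  have h4 := WittAux.card_W _ (fun i => n i / δ) hs
  have h5 : (∏ i, ((n i / δ).factorial : ℚ)) ≠ 0 :=
    Finset.prod_ne_zero_iff.2 fun i _ => by exact_mod_cast Nat.factorial_ne_zero _
  rw [eq_div_iff h5, mul_assoc, ← h4]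
  push_cast
  rfl
end

section
/- (Signature of a piecewise-linear path via Chen's identity) Let γ be the piecewise-linear path in ℝ^d with successive displacements x_1, …, x_n ∈ ℝ^d. Then for each m ≥ 0, level m of the signature of γ, as an element of (ℝ^d)^{⊗m}, equals the level-m component of the truncated tensor product exp(x_1) ⊗ exp(x_2) ⊗ ⋯ ⊗ exp(x_n), where exp(x) = Σ_{k=0}^{m} x^{⊗k}/k! in T^{(m)}(ℝ^d). -/
open MeasureTheory intervalIntegral

/-- Words of length at most `m` over the alphabet `{1, …, d}`: an indexing of the
standard (word) basis of the truncated tensor algebra `T^{(m)}(ℝ^d)`. -/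
def TWord (d m : ℕ) := {w : List (Fin d) // w.length ≤ m}

/-- The truncated tensor algebra `T^{(m)}(ℝ^d) = ⊕_{k=0}^{m} (ℝ^d)^{⊗k}`, an element
being recorded by its coordinates on the word basis. -/
def TTA (d m : ℕ) := TWord d m → ℝ

namespace TTA

variable {d m : ℕ}

/-- The empty word, indexing the level-0 component. -/
def emptyWord : TWord d m := ⟨[], by simp⟩

/-- The multiplicative unit `1` of `T^{(m)}(ℝ^d)`. -/
def one : TTA d m := fun w => if w.1 = [] then 1 else 0

/-- The truncated tensor (concatenation) product on `T^{(m)}(ℝ^d)`. -/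
def mul (x y : TTA d m) : TTA d m := fun w =>
  ∑ j ∈ Finset.range (w.1.length + 1),
    x ⟨w.1.take j, by rw [List.length_take]; exact le_trans (min_le_right _ _) w.2⟩ *
    y ⟨w.1.drop j, by rw [List.length_drop]; exact le_trans (Nat.sub_le _ _) w.2⟩

/-- Powers in `T^{(m)}(ℝ^d)`. -/
def pow (x : TTA d m) : ℕ → TTA d m
  | 0 => one
  | n + 1 => mul x (pow x n)

/-- `exp T = ∑_{n=0}^{m} T^n / n!` in `T^{(m)}(ℝ^d)`. -/
noncomputable def exp (x : TTA d m) : TTA d m := fun w =>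
  ∑ n ∈ Finset.range (m + 1), ((n.factorial : ℝ))⁻¹ * pow x n w

/-- `log (1 + T) = ∑_{n=1}^{m} (-1)^{n-1} T^n / n` in `T^{(m)}(ℝ^d)`, applied to an
element `S = 1 + T`. -/
noncomputable def log (x : TTA d m) : TTA d m := fun w =>
  ∑ n ∈ Finset.Icc 1 m, ((-1 : ℝ) ^ (n - 1) / (n : ℝ)) * pow (fun u => x u - one u) n w

end TTA

namespace TTA

/-- The element of `T^{(m)}(ℝ^d)` given by a vector `v ∈ ℝ^d` placed in level 1. -/
def seg {d m : ℕ} (v : Fin d → ℝ) : TTA d m := fun w =>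
  match w.1 with
  | [i] => v i
  | _ => 0

/-- Product of a list of elements of `T^{(m)}(ℝ^d)`. -/
def listProd {d m : ℕ} : List (TTA d m) → TTA d m
  | [] => one
  | x :: L => mul x (listProd L)

end TTA

theorem aux_lip (d n : ℕ) (x : Fin n → Fin d → ℝ) (i : Fin d) :
    ∃ C, LipschitzWith C (fun t : ℝ => ∑ j : Fin n, min (max (t - (j : ℕ)) 0) 1 * x j i) := by
  have key : ∀ s : Finset (Fin n), ∃ C,
      LipschitzWith C (fun t : ℝ => ∑ j ∈ s, min (max (t - (j : ℕ)) 0) 1 * x j i) := by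
    intro s
    induction s using Finset.induction_on with
    | empty => exact ⟨0, by simpa using LipschitzWith.const (0 : ℝ)⟩
    | insert j s hj ih =>
      obtain ⟨C, hC⟩ := ih
      simp only [Finset.sum_insert hj]
      have h1 : LipschitzWith 1 (fun t : ℝ => min (max (t - (j : ℕ)) 0) 1) := by
        have h0 : LipschitzWith 1 (fun t : ℝ => t - (j : ℕ)) := by
          refine LipschitzWith.of_dist_le_mul fun a b => ?_
          simp [Real.dist_eq]
        exact (h0.max_const 0).min_const 1
      have h2 : LipschitzWith (‖x j i‖₊) (fun t : ℝ => min (max (t - (j : ℕ)) 0) 1 * x j i) := by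
        refine LipschitzWith.of_dist_le_mul fun a b => ?_
        have := h1.dist_le_mul a b
        rw [Real.dist_eq] at this ⊢
        rw [← sub_mul, abs_mul, mul_comm]
        simp only [NNReal.coe_one, one_mul] at this
        simp only [coe_nnnorm, Real.norm_eq_abs]
        exact mul_le_mul_of_nonneg_left this (abs_nonneg _)
      exact ⟨_, h2.add hC⟩
  exact key Finset.univ

theorem aux_int (f : ℝ → ℝ) (C : NNReal) (h : LipschitzWith C f) (a b : ℝ) :
    IntervalIntegrable (deriv f) volume a b := by
  refine (intervalIntegrable_const (c := (C : ℝ))).mono_fun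
    (measurable_deriv f).aestronglyMeasurable ?_
  refine Filter.Eventually.of_forall fun t => ?_
  have := norm_deriv_le_of_lipschitz (x₀ := t) h
  simpa using this

theorem aux_cont (d : ℕ) (γ : ℝ → Fin d → ℝ)
    (hI : ∀ i a b, IntervalIntegrable (deriv (fun s => γ s i)) volume a b) (a : ℝ)
    (w : List (Fin d)) : Continuous (sigRev d γ a w) := by
  induction w with
  | nil => simpa [sigRev] using (continuous_const : Continuous fun _ : ℝ => (1 : ℝ))
  | cons i w ih =>
    have : sigRev d γ a (i :: w) =
        fun b => ∫ t in a..b, sigRev d γ a w t * deriv (fun s => γ s i) t := by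
      funext b; rfl
    rw [this]
    exact intervalIntegral.continuous_primitive
      (fun p q => (hI i p q).continuousOn_mul ih.continuousOn) a

theorem aux_chen (d : ℕ) (γ : ℝ → Fin d → ℝ)
    (hI : ∀ i a b, IntervalIntegrable (deriv (fun s => γ s i)) volume a b) (a b : ℝ)
    (w : List (Fin d)) : ∀ c, sigRev d γ a w c =
      ∑ j ∈ Finset.range (w.length + 1),
        sigRev d γ a (w.drop j) b * sigRev d γ b (w.take j) c := by
  induction w with
  | nil => intro c; simp [sigRev]
  | cons i w ih =>
    intro c
    have hint : ∀ (e : ℝ) (u : List (Fin d)) p q, IntervalIntegrable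
        (fun t => sigRev d γ e u t * deriv (fun s => γ s i) t) volume p q := fun e u p q =>
      (hI i p q).continuousOn_mul (aux_cont d γ hI e u).continuousOn
    rw [List.length_cons, Finset.sum_range_succ']
    simp only [List.drop_succ_cons, List.take_succ_cons, List.drop_zero, List.take_zero]
    have e1 : sigRev d γ a (i :: w) c = sigRev d γ a (i :: w) b +
        ∫ t in b..c, sigRev d γ a w t * deriv (fun s => γ s i) t := by
      simp only [sigRev]
      exact (intervalIntegral.integral_add_adjacent_intervals (hint a w a b) (hint a w b c)).symm
    have e2 : ∫ t in b..c, sigRev d γ a w t * deriv (fun s => γ s i) t =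
        ∑ j ∈ Finset.range (w.length + 1),
          sigRev d γ a (w.drop j) b * sigRev d γ b (i :: w.take j) c := by
      have : ∀ t, sigRev d γ a w t * deriv (fun s => γ s i) t =
          ∑ j ∈ Finset.range (w.length + 1), sigRev d γ a (w.drop j) b *
            (sigRev d γ b (w.take j) t * deriv (fun s => γ s i) t) := by
        intro t
        rw [ih t, Finset.sum_mul]
        exact Finset.sum_congr rfl fun j _ => by ring
      simp only [this]
      rw [intervalIntegral.integral_finsetSum
        (fun j _ => (hint b (w.take j) b c).const_mul _)]
      refine Finset.sum_congr rfl fun j _ => ?_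
      rw [intervalIntegral.integral_const_mul]
      rfl
    rw [e1, e2]
    simp only [sigRev]
    ring

theorem aux_deriv (d n : ℕ) (x : Fin n → Fin d → ℝ) (i : Fin d) (k : Fin n) (t : ℝ)
    (h1 : ((k : ℕ) : ℝ) < t) (h2 : t < ((k : ℕ) : ℝ) + 1) :
    deriv (fun t : ℝ => ∑ j : Fin n, min (max (t - (j : ℕ)) 0) 1 * x j i) t = x k i := by
  have key : ∀ j ∈ (Finset.univ : Finset (Fin n)),
      HasDerivAt (fun t : ℝ => min (max (t - (j : ℕ)) 0) 1 * x j i)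
        (if j = k then x j i else 0) t := by
    intro j _
    have hn : Set.Ioo ((k : ℕ) : ℝ) (((k : ℕ) : ℝ) + 1) ∈ nhds t := Ioo_mem_nhds h1 h2
    rcases lt_trichotomy j k with h | h | h
    · rw [if_neg h.ne]
      refine (hasDerivAt_const t (x j i)).congr_of_eventuallyEq ?_
      filter_upwards [hn] with s hs
      have : ((j : ℕ) : ℝ) + 1 ≤ ((k : ℕ) : ℝ) := by exact_mod_cast h
      rw [min_eq_right, one_mul]
      exact le_max_of_le_left (by linarith [hs.1])
    · subst h
      rw [if_pos rfl]
      have h0 : HasDerivAt (fun s : ℝ => (s - (j : ℕ)) * x j i) (x j i) t := by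
        simpa using ((hasDerivAt_id t).sub_const ((j : ℕ) : ℝ)).mul_const (x j i)
      refine h0.congr_of_eventuallyEq ?_
      filter_upwards [hn] with s hs
      rw [max_eq_left (by linarith [hs.1]), min_eq_left (by linarith [hs.2])]
    · rw [if_neg h.ne']
      refine (hasDerivAt_const t (0 : ℝ)).congr_of_eventuallyEq ?_
      filter_upwards [hn] with s hs
      have : ((k : ℕ) : ℝ) + 1 ≤ ((j : ℕ) : ℝ) := by exact_mod_cast h
      rw [max_eq_right (by linarith [hs.2])]
      simp
  have := (HasDerivAt.fun_sum key).deriv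
  simpa using this

theorem aux_line (d : ℕ) (γ : ℝ → Fin d → ℝ) (v : Fin d → ℝ) (a : ℝ)
    (h : ∀ i t, a < t → t < a + 1 → deriv (fun s => γ s i) t = v i)
    (w : List (Fin d)) : ∀ t, a ≤ t → t ≤ a + 1 →
      sigRev d γ a w t = (w.map v).prod * ((t - a) ^ w.length / (w.length.factorial : ℝ)) := by
  induction w with
  | nil => intro t _ _; simp [sigRev]
  | cons i w ih =>
    intro b hb hb1
    have e : sigRev d γ a (i :: w) b = ∫ t in a..b,
        ((w.map v).prod * v i / (w.length.factorial : ℝ)) * (t - a) ^ w.length := by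
      simp only [sigRev]
      refine intervalIntegral.integral_congr_ae ?_
      have hne : ∀ᵐ t : ℝ, t ≠ b := by
        simp [ae_iff]
      filter_upwards [hne] with t htb ht
      rw [Set.uIoc_of_le hb] at ht
      have hlt : t < b := lt_of_le_of_ne ht.2 htb
      rw [ih t ht.1.le (by linarith), h i t ht.1 (by linarith)]
      ring
    rw [e, intervalIntegral.integral_const_mul,
      intervalIntegral.integral_comp_sub_right (fun t => t ^ w.length) a, integral_pow]
    have : ((w.length.factorial : ℕ) : ℝ) ≠ 0 := by positivity
    simp only [List.map_cons, List.prod_cons, List.length_cons, Nat.factorial_succ]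
    push_cast
    have h2 : ((w.length : ℕ) : ℝ) + 1 ≠ 0 := by positivity
    field_simp
    simp

theorem aux_pow {d m : ℕ} (v : Fin d → ℝ) (n : ℕ) : ∀ w : TWord d m,
    TTA.pow (TTA.seg v) n w = if w.1.length = n then (w.1.map v).prod else 0 := by
  induction n with
  | zero =>
    rintro ⟨w, hw⟩
    cases w <;> simp [TTA.pow, TTA.one]
  | succ n ih =>
    rintro ⟨w, hw⟩
    cases w with
    | nil => simp [TTA.pow, TTA.mul, TTA.seg]
    | cons i w =>
      simp only [TTA.pow, TTA.mul]
      rw [Finset.sum_eq_single 1]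
      · refine (congrArg₂ (· * ·) rfl (ih _)).trans ?_
        simp [TTA.seg]
      · intro j hj hj1
        have : (TTA.seg v : TTA d m) ⟨(i :: w).take j, by
            rw [List.length_take]; exact le_trans (min_le_right _ _) hw⟩ = 0 := by
          rcases j with _ | _ | j
          · simp [TTA.seg]
          · exact absurd rfl hj1
          · cases w with
            | nil => simp at hj
            | cons i' w => simp [TTA.seg]
        rw [this, zero_mul]
      · intro h; simp at h

theorem aux_exp {d m : ℕ} (v : Fin d → ℝ) (w : TWord d m) :
    TTA.exp (TTA.seg v) w = (w.1.map v).prod / (w.1.length.factorial : ℝ) := by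
  simp only [TTA.exp, aux_pow]
  rw [Finset.sum_eq_single w.1.length]
  · rw [if_pos rfl]; ring
  · intro j _ hj
    rw [if_neg (Ne.symm hj), mul_zero]
  · intro h
    exact absurd (Finset.mem_range.2 (Nat.lt_succ_of_le w.2)) h

theorem aux_main (d n m : ℕ) (x : Fin n → Fin d → ℝ)
    (γ : ℝ → Fin d → ℝ)
    (hγ : ∀ t i, γ t i = ∑ j : Fin n, min (max (t - (j : ℕ)) 0) 1 * x j i)
    (l : ℕ) : ∀ k : ℕ, k + l = n → ∀ w : TWord d m,
    sig d γ k n w.1 =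
      TTA.listProd ((List.ofFn fun j => TTA.exp (TTA.seg (x j))).drop k) w := by
  have hfun : ∀ i, (fun s => γ s i) =
      fun t : ℝ => ∑ j : Fin n, min (max (t - (j : ℕ)) 0) 1 * x j i := fun i => by
    funext t; exact hγ t i
  have hI : ∀ i a b, IntervalIntegrable (deriv (fun s => γ s i)) volume a b := by
    intro i a b
    rw [hfun i]
    obtain ⟨C, hC⟩ := aux_lip d n x i
    exact aux_int _ C hC a b
  induction l with
  | zero =>
    intro k hk w
    obtain rfl : k = n := by omega
    rw [List.drop_eq_nil_of_le (by simp)]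
    simp only [TTA.listProd, TTA.one, sig]
    split_ifs with h
    · simp [h, sigRev]
    · cases hr : w.1.reverse with
      | nil => exact absurd (by simpa using hr) h
      | cons i u => simp [sigRev]
  | succ l ih =>
    intro k hk w
    have hkn : k < n := by omega
    rw [List.drop_eq_getElem_cons (by simpa using hkn)]
    simp only [TTA.listProd, TTA.mul, List.getElem_ofFn]
    rw [sig, aux_chen d γ hI (k : ℝ) ((k : ℝ) + 1), List.length_reverse,
      ← Finset.sum_range_reflect]
    refine Finset.sum_congr rfl fun j hj => ?_
    have hj' : j ≤ w.1.length := Nat.lt_succ_iff.1 (Finset.mem_range.1 hj)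
    refine Eq.trans ?_ (congrArg₂ (· * ·) (aux_exp _ _).symm (ih (k + 1) (by omega) _))
    have hd : w.1.reverse.drop (w.1.length + 1 - 1 - j) = (w.1.take j).reverse := by
      rw [List.drop_reverse]; congr 2; omega
    have ht : w.1.reverse.take (w.1.length + 1 - 1 - j) = (w.1.drop j).reverse := by
      rw [List.take_reverse]; congr 2; omega
    rw [hd, ht, aux_line d γ (x ⟨k, hkn⟩) k ?_ _ _ (by linarith) le_rfl]
    · simp [sig, List.map_reverse, List.prod_reverse]
      exact Or.inl (div_eq_mul_inv _ _).symm
    · intro i t h1 h2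
      rw [hfun i]
      exact aux_deriv d n x i ⟨k, hkn⟩ t h1 h2

/-- signature of a piecewise-linear path via Chen's identity: for the
piecewise-linear path `γ` on `[0, n]` with successive displacements `x 0, …, x (n-1)`,
level `m` of the signature of `γ` equals the level-`m` component of the truncated
tensor product `exp (x 0) ⊗ exp (x 1) ⊗ ⋯ ⊗ exp (x (n-1))` in `T^{(m)}(ℝ^d)`,
where `exp v = ∑_{k=0}^{m} v^{⊗k} / k!`. -/
theorem sig_piecewise_linear (d n m : ℕ) (x : Fin n → Fin d → ℝ)
    (γ : ℝ → Fin d → ℝ)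
    (hγ : ∀ t i, γ t i = ∑ j : Fin n, min (max (t - (j : ℕ)) 0) 1 * x j i)
    (w : List (Fin d)) (hw : w.length = m) :
    sig d γ 0 n w =
      TTA.listProd (List.ofFn fun j => TTA.exp (TTA.seg (x j))) ⟨w, hw.le⟩ := by
  simpa using aux_main d n m x γ hγ n 0 (by simp) ⟨w, hw.le⟩
end
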